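/- Let H be a finitely generated abelian group. Then the restricted wreath product H ≀ ℤ admits an invariant finite L-presentation: if H = ⟨X | C⟩ with X finite and C the commutation and order relations, then H ≀ ℤ ≅ ⟨X ∪ {t} | ∅ | {σ_y : y ∈ X} | {[x, y^t] : x,y ∈ X} ∪ {x^{r_x} : x ∈ X, r_x < ∞}⟩, where σ_y fixes t and all x ≠ y and sends y ↦ y^t·y, and each σ_y induces an endomorphism of H ≀ ℤ. -/

import Mathlib

/-!
Let `P` be the group defined by the L-presentation. The relations `[x, y^t] = 1` and the
endomorphisms of `P` induced by the `σ_y` force all conjugates `x^(t^m)` and `y^(t^n)` to commute.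
For `x ≠ y`, applying `σ_x` to `[x, y^t] = 1` gives `[x, y] = 1`, and applying `σ_y` to
`[x, y^(t^k)] = 1` gives `[x, y^(t^(k+1)) y^(t^k)] = 1`, hence `[x, y^(t^(k+1))] = 1`. For `x = y`
one gets `[x^t x, x^(t^(k+1)) x^(t^k)] = 1`, where `x^t` already commutes with both factors on the
right. So the conjugates generate an image of `⨁_ℤ H`, which yields a homomorphism `H ≀ ℤ → P`.

Conversely, the iterated relators are trivial in `H ≀ ℤ`: the substitution `y ↦ y^t y` keeps the
images of the generators `y` inside the abelian normal subgroup `⨁_ℤ H` and preserves `y^(r_y) = 1`.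
The two homomorphisms are mutually inverse on generators.
-/

/-- Conjugation `a^b = b⁻¹ a b`. -/
def conjBy {G : Type*} [Group G] (a b : G) : G := b⁻¹ * a * b

/-- Commutator `[a,b] = a⁻¹ b⁻¹ a b`. -/
def commAt {G : Type*} [Group G] (a b : G) : G := a⁻¹ * b⁻¹ * a * b

section ConjBy

variable {G : Type*} [Group G]

theorem conjBy_eq_conj_inv (a b : G) : conjBy a b = MulAut.conj b⁻¹ a := by
  simp [conjBy]

theorem conjBy_one_right (a : G) : conjBy a 1 = a := by
  simp [conjBy]

theorem one_conjBy (b : G) : conjBy 1 b = 1 := by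
  simp [conjBy]

theorem conjBy_conjBy (a b c : G) : conjBy (conjBy a b) c = conjBy a (b * c) := by
  simp [conjBy, mul_assoc]

theorem mul_conjBy (a b c : G) : conjBy (a * b) c = conjBy a c * conjBy b c := by
  simp only [conjBy_eq_conj_inv, map_mul]

theorem conjBy_pow (a b : G) (n : ℕ) : conjBy a b ^ n = conjBy (a ^ n) b := by
  simp only [conjBy_eq_conj_inv, map_pow]

theorem map_conjBy {G' F : Type*} [Group G'] [FunLike F G G'] [MonoidHomClass F G G']
    (f : F) (a b : G) : f (conjBy a b) = conjBy (f a) (f b) := by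
  simp only [conjBy, map_mul, map_inv]

theorem map_commAt {G' F : Type*} [Group G'] [FunLike F G G'] [MonoidHomClass F G G']
    (f : F) (a b : G) : f (commAt a b) = commAt (f a) (f b) := by
  simp only [commAt, map_mul, map_inv]

theorem commAt_eq_one_iff {a b : G} : commAt a b = 1 ↔ Commute a b := by
  have h : commAt a b = (b * a)⁻¹ * (a * b) := by simp only [commAt, mul_inv_rev, mul_assoc]
  rw [h, inv_mul_eq_one]
  exact eq_comm

theorem commute_conjBy_iff {a b c : G} :
    Commute (conjBy a c) (conjBy b c) ↔ Commute a b := by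
  simpa only [conjBy, inv_inv] using Commute.conj_iff (a := a) (b := b) c⁻¹

theorem commute_mul_right_iff {a b c : G} (h : Commute a c) :
    Commute a (b * c) ↔ Commute a b :=
  ⟨fun hbc => by simpa using hbc.mul_right h.inv_right, fun hb => hb.mul_right h⟩

end ConjBy

section ConjMulEndomorphism

variable {G : Type*} [Group G] {t a b : G} {s : Monoid.End G}

theorem end_conjBy_pow (ht : s t = t) (ha : s a = conjBy a t * a) (k : ℕ) :
    s (conjBy a (t ^ k)) = conjBy a (t ^ (k + 1)) * conjBy a (t ^ k) := by
  rw [map_conjBy, map_pow, ht, ha, mul_conjBy, conjBy_conjBy, pow_succ']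

theorem commute_of_commute_conjBy (ht : s t = t) (ha : s a = conjBy a t * a) (hb : s b = b)
    (h : Commute a (conjBy b t)) : Commute a b := by
  have hs : Commute (conjBy a t * a) (conjBy b t) := by
    simpa only [map_conjBy, ht, ha, hb] using h.map s
  exact commute_conjBy_iff.1 ((commute_mul_right_iff h.symm).1 hs.symm).symm

theorem commute_conjBy_pow_of_fixed (ht : s t = t) (ha : s a = conjBy a t * a) (hb : s b = b)
    (h : Commute b a) (k : ℕ) : Commute b (conjBy a (t ^ k)) := by
  induction k with
  | zero => simpa only [pow_zero, conjBy_one_right] using h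
  | succ k ih =>
    have hs := ih.map s
    rw [hb, end_conjBy_pow ht ha] at hs
    exact (commute_mul_right_iff ih).1 hs

theorem commute_self_conjBy_pow (ht : s t = t) (ha : s a = conjBy a t * a)
    (h : Commute a (conjBy a t)) (k : ℕ) : Commute a (conjBy a (t ^ k)) := by
  induction k using Nat.twoStepInduction with
  | zero => simp only [pow_zero, conjBy_one_right, Commute.refl]
  | one => simpa only [pow_one] using h
  | more k ih₀ ih₁ =>
    have shifted {m : ℕ} (hm : Commute a (conjBy a (t ^ m))) :
        Commute (conjBy a t) (conjBy a (t ^ (m + 1))) := by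
      rwa [pow_succ, ← conjBy_conjBy, commute_conjBy_iff]
    have hs := ih₁.map s
    rw [ha, end_conjBy_pow ht ha] at hs
    have ha' : Commute a (conjBy a (t ^ (k + 2)) * conjBy a (t ^ (k + 1))) := by
      simpa using ((shifted ih₁).mul_right (shifted ih₀)).inv_left.mul_left hs
    exact (commute_mul_right_iff ih₁).1 ha'

theorem commute_conjBy_zpow_of_pow {ι : Type*} {x : ι → G}
    (h : ∀ i j (k : ℕ), Commute (x i) (conjBy (x j) (t ^ k))) (i j : ι) (m n : ℤ) :
    Commute (conjBy (x i) (t ^ m)) (conjBy (x j) (t ^ n)) := by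
  wlog hmn : m ≤ n generalizing i j m n
  · exact (this j i n m (le_of_not_ge hmn)).symm
  obtain ⟨k, rfl⟩ := Int.le.dest hmn
  rw [add_comm, zpow_add, ← conjBy_conjBy, commute_conjBy_iff, zpow_natCast]
  exact h i j k

theorem commute_conjBy_zpow {ι : Type*} {x : ι → G} {s : ι → Monoid.End G}
    (ht : ∀ j, s j t = t) (hself : ∀ j, s j (x j) = conjBy (x j) t * x j)
    (hne : ∀ i j, i ≠ j → s j (x i) = x i) (hcomm : ∀ i j, Commute (x i) (conjBy (x j) t))
    (i j : ι) (m n : ℤ) : Commute (conjBy (x i) (t ^ m)) (conjBy (x j) (t ^ n)) := by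
  refine commute_conjBy_zpow_of_pow (fun i j k => ?_) i j m n
  rcases eq_or_ne i j with rfl | hij
  · exact commute_self_conjBy_pow (ht i) (hself i) (hcomm i i) k
  · have hij₀ : Commute (x i) (x j) :=
      commute_of_commute_conjBy (ht i) (hself i) (hne j i hij.symm) (hcomm i j)
    exact commute_conjBy_pow_of_fixed (ht j) (hself j) (hne i j hij) hij₀ k

end ConjMulEndomorphism

section IteratedRelators

/-- The relators `⋃_{φ ∈ Φ*} φ(R)` of the L-presentation `⟨X | ∅ | Φ | R⟩`, for a set `Φ` of
endomorphisms of a group `F` (the free group on `X` in the case of interest). -/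
def iteratedRelators {F : Type*} [Group F] (Φ : Set (Monoid.End F)) (R : Set F) : Set F :=
  ⋃ φ ∈ Submonoid.closure Φ, ⇑φ '' R

theorem mem_iteratedRelators {F : Type*} [Group F] {Φ : Set (Monoid.End F)} {R : Set F} {w : F} :
    w ∈ iteratedRelators Φ R ↔ ∃ φ ∈ Submonoid.closure Φ, ∃ v ∈ R, φ v = w := by
  simp only [iteratedRelators, Set.mem_iUnion, Set.mem_image, exists_prop]

theorem subset_iteratedRelators {F : Type*} [Group F] (Φ : Set (Monoid.End F)) (R : Set F) :
    R ⊆ iteratedRelators Φ R :=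
  fun w hw => mem_iteratedRelators.2 ⟨1, one_mem _, w, hw, rfl⟩

theorem mapsTo_iteratedRelators {F : Type*} [Group F] {Φ : Set (Monoid.End F)} (R : Set F)
    {φ : Monoid.End F} (hφ : φ ∈ Φ) :
    (iteratedRelators Φ R).MapsTo φ (iteratedRelators Φ R) := by
  intro w hw
  obtain ⟨ψ, hψ, v, hv, rfl⟩ := mem_iteratedRelators.1 hw
  exact mem_iteratedRelators.2 ⟨φ * ψ, mul_mem (Submonoid.subset_closure hφ) hψ, v, hv, rfl⟩

theorem map_eq_one_of_mem_iteratedRelators {F G : Type*} [Group F] [Group G]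
    {Φ : Set (Monoid.End F)} {R : Set F} (p : (F →* G) → Prop)
    (hΦ : ∀ φ ∈ Φ, ∀ f, p f → p (f.comp φ)) (hR : ∀ f, p f → ∀ w ∈ R, f w = 1)
    {f : F →* G} (hf : p f) {w : F} (hw : w ∈ iteratedRelators Φ R) : f w = 1 := by
  obtain ⟨φ, hφ, v, hv, rfl⟩ := mem_iteratedRelators.1 hw
  suffices hp : p (f.comp φ) from hR _ hp v hv
  clear hw
  induction hφ using Submonoid.closure_induction_left generalizing f with
  | one => exact hf
  | mul_left φ hφ _ _ ih => exact ih (hΦ φ hφ f hf)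

/-- The endomorphism of the group presented by `⟨X | ∅ | Φ | R⟩` induced by a member of `Φ`. -/
def inducedEnd {α : Type*} {Φ : Set (Monoid.End (FreeGroup α))} (R : Set (FreeGroup α))
    {φ : Monoid.End (FreeGroup α)} (hφ : φ ∈ Φ) :
    Monoid.End (PresentedGroup (iteratedRelators Φ R)) :=
  PresentedGroup.map φ (mapsTo_iteratedRelators R hφ)

theorem inducedEnd_mk {α : Type*} {Φ : Set (Monoid.End (FreeGroup α))} (R : Set (FreeGroup α))
    {φ : Monoid.End (FreeGroup α)} (hφ : φ ∈ Φ) (w : FreeGroup α) :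
    inducedEnd R hφ (PresentedGroup.mk _ w) = PresentedGroup.mk _ (φ w) :=
  rfl

theorem apply_mem_normalClosure_iteratedRelators {α : Type*}
    {Φ : Set (Monoid.End (FreeGroup α))} {R : Set (FreeGroup α)} {φ : Monoid.End (FreeGroup α)}
    (hφ : φ ∈ Φ) {w : FreeGroup α} (hw : w ∈ Subgroup.normalClosure (iteratedRelators Φ R)) :
    φ w ∈ Subgroup.normalClosure (iteratedRelators Φ R) := by
  rw [← PresentedGroup.mk_eq_one_iff] at hw ⊢
  rw [← inducedEnd_mk R hφ, hw, map_one]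

end IteratedRelators

section WreathPresentation

variable {ι : Type*}

/-- The endomorphism `σ_y` of the free group on `ι ∪ {t}`, sending `y` to `y^t * y` and fixing all
other generators. The stable letter `t` is `Sum.inr ()`. -/
def conjMulEnd [DecidableEq ι] (y : ι) : Monoid.End (FreeGroup (ι ⊕ Unit)) :=
  FreeGroup.lift fun g : ι ⊕ Unit =>
    match g with
    | Sum.inl x =>
        if x = y then
          conjBy (FreeGroup.of (Sum.inl y)) (FreeGroup.of (Sum.inr ())) *
            FreeGroup.of (Sum.inl y)
        else FreeGroup.of (Sum.inl x)
    | Sum.inr _ => FreeGroup.of (Sum.inr ())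

theorem conjMulEnd_of_inr [DecidableEq ι] (y : ι) (u : Unit) :
    conjMulEnd y (FreeGroup.of (Sum.inr u)) = FreeGroup.of (Sum.inr u) :=
  FreeGroup.lift_apply_of

theorem conjMulEnd_of_inl_self [DecidableEq ι] (y : ι) :
    conjMulEnd y (FreeGroup.of (Sum.inl y)) =
      conjBy (FreeGroup.of (Sum.inl y)) (FreeGroup.of (Sum.inr ())) *
        FreeGroup.of (Sum.inl y) :=
  FreeGroup.lift_apply_of.trans (if_pos rfl)

theorem conjMulEnd_of_inl_of_ne [DecidableEq ι] {x y : ι} (h : x ≠ y) :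
    conjMulEnd y (FreeGroup.of (Sum.inl x)) = FreeGroup.of (Sum.inl x) :=
  FreeGroup.lift_apply_of.trans (if_neg h)

/-- The relators `[x, y^t]` and `x^{r_x}` for `r_x < ∞`, an infinite order being encoded
as `r x = 0`. -/
def wreathBaseRelators (r : ι → ℕ) : Set (FreeGroup (ι ⊕ Unit)) :=
  {w | ∃ x y : ι,
      w = commAt (FreeGroup.of (Sum.inl x))
        (conjBy (FreeGroup.of (Sum.inl y)) (FreeGroup.of (Sum.inr ())))} ∪
    {w | ∃ x : ι, r x ≠ 0 ∧ w = FreeGroup.of (Sum.inl x) ^ (r x)}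

theorem map_eq_one_of_mem_wreathBaseRelators {G : Type*} [Group G] {r : ι → ℕ}
    {f : FreeGroup (ι ⊕ Unit) →* G}
    (hcomm : ∀ x y, Commute (f (FreeGroup.of (Sum.inl x)))
      (conjBy (f (FreeGroup.of (Sum.inl y))) (f (FreeGroup.of (Sum.inr ())))))
    (hpow : ∀ x, f (FreeGroup.of (Sum.inl x)) ^ r x = 1)
    {w : FreeGroup (ι ⊕ Unit)} (hw : w ∈ wreathBaseRelators r) : f w = 1 := by
  rcases hw with ⟨x, y, rfl⟩ | ⟨x, -, rfl⟩
  · rw [map_commAt, map_conjBy, commAt_eq_one_iff]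
    exact hcomm x y
  · rw [map_pow, hpow]

variable [DecidableEq ι]

/-- The relators of the L-presentation of `H ≀ ℤ`, for `H` the direct sum of cyclic groups of orders
`r x`. -/
abbrev wreathRelators (r : ι → ℕ) : Set (FreeGroup (ι ⊕ Unit)) :=
  iteratedRelators (Set.range conjMulEnd) (wreathBaseRelators r)

-- Membership in an abelian normal subgroup `N` and the bound on the order are both inherited by
-- `y^t * y`, so precomposition with `σ_y` preserves the assumptions on `f`.
theorem map_eq_one_of_mem_wreathRelators {G : Type*} [Group G] {r : ι → ℕ}
    (N : Subgroup G) [N.Normal] [IsMulCommutative N] {f : FreeGroup (ι ⊕ Unit) →* G}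
    (hN : ∀ x, f (FreeGroup.of (Sum.inl x)) ∈ N)
    (hpow : ∀ x, f (FreeGroup.of (Sum.inl x)) ^ r x = 1) {w : FreeGroup (ι ⊕ Unit)}
    (hw : w ∈ wreathRelators r) : f w = 1 := by
  have conjBy_mem {a : G} (ha : a ∈ N) (b : G) : conjBy a b ∈ N := by
    rw [conjBy_eq_conj_inv]
    exact ‹N.Normal›.conj_mem a ha b⁻¹
  have commute {a b : G} (ha : a ∈ N) (hb : b ∈ N) : Commute a b := setLike_mul_comm ha hb
  refine map_eq_one_of_mem_iteratedRelators
    (fun f : FreeGroup (ι ⊕ Unit) →* G => ∀ x,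
      f (FreeGroup.of (Sum.inl x)) ∈ N ∧ f (FreeGroup.of (Sum.inl x)) ^ r x = 1)
    ?_ ?_ (fun x => ⟨hN x, hpow x⟩) hw
  · rintro _ ⟨y, rfl⟩ f hf x
    change f (conjMulEnd y _) ∈ N ∧ f (conjMulEnd y _) ^ r x = 1
    rcases eq_or_ne x y with rfl | hxy
    · obtain ⟨hx, hxr⟩ := hf x
      have hxt := conjBy_mem hx (f (FreeGroup.of (Sum.inr ())))
      rw [conjMulEnd_of_inl_self, map_mul, map_conjBy]
      refine ⟨mul_mem hxt hx, ?_⟩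
      rw [(commute hxt hx).mul_pow, conjBy_pow, hxr, one_conjBy, one_mul]
    · rw [conjMulEnd_of_inl_of_ne hxy]
      exact hf x
  · intro f hf w hw
    exact map_eq_one_of_mem_wreathBaseRelators
      (fun x y => commute (hf x).1 (conjBy_mem (hf y).1 _)) (fun x => (hf x).2) hw

theorem commute_conjBy_zpow_presentedGroup (r : ι → ℕ) (x y : ι) (m n : ℤ) :
    Commute (S := PresentedGroup (wreathRelators r))
      (conjBy (.of (.inl x)) (.of (.inr ()) ^ m)) (conjBy (.of (.inl y)) (.of (.inr ()) ^ n)) := by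
  refine commute_conjBy_zpow
    (x := fun i => (.of (.inl i) : PresentedGroup (wreathRelators r)))
    (s := fun y => inducedEnd _ (Set.mem_range_self y)) ?_ ?_ ?_ ?_ x y m n
  · exact fun y => congrArg (PresentedGroup.mk _) (conjMulEnd_of_inr y ())
  · exact fun y => congrArg (PresentedGroup.mk _) (conjMulEnd_of_inl_self y)
  · exact fun x y hxy => congrArg (PresentedGroup.mk _) (conjMulEnd_of_inl_of_ne hxy)
  · exact fun x y => commAt_eq_one_iff.1 <| PresentedGroup.one_of_mem <|
      subset_iteratedRelators _ _ (Or.inl ⟨x, y, rfl⟩)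

theorem of_inl_pow_presentedGroup (r : ι → ℕ) (x : ι) :
    (PresentedGroup.of (Sum.inl x) :
      PresentedGroup (wreathRelators r)) ^ r x = 1 := by
  rcases eq_or_ne (r x) 0 with h | h
  · rw [h, pow_zero]
  · exact PresentedGroup.one_of_mem (subset_iteratedRelators _ _ (Or.inr ⟨x, h, rfl⟩))

end WreathPresentation

section DirectSumOfCyclicGroups

open scoped DirectSum

variable {ι H : Type*} [DecidableEq ι] [AddCommGroup H] {r : ι → ℕ}

/-- The generator of the `i`-th cyclic summand of `H`. -/
def cyclicGen (e : H ≃+ ⨁ i, ZMod (r i)) (i : ι) : H :=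
  e.symm (DirectSum.of (fun i => ZMod (r i)) i 1)

variable (e : H ≃+ ⨁ i, ZMod (r i))

theorem nsmul_cyclicGen (i : ι) : r i • cyclicGen e i = 0 := by
  rw [cyclicGen, ← map_nsmul, ← map_nsmul, nsmul_one, ZMod.natCast_self, map_zero, map_zero]

theorem addHom_ext_cyclicGen {A : Type*} [AddGroup A] {f g : H →+ A}
    (h : ∀ i, f (cyclicGen e i) = g (cyclicGen e i)) : f = g := by
  suffices hfg : f.comp e.symm.toAddMonoidHom = g.comp e.symm.toAddMonoidHom by
    ext a
    simpa using DFunLike.congr_fun hfg (e a)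
  refine DirectSum.addHom_ext' fun i => AddMonoidHom.ext fun z => ?_
  obtain ⟨k, rfl⟩ := ZMod.intCast_surjective z
  have hk : (k : ZMod (r i)) = k • 1 := (zsmul_one k).symm
  rw [hk, map_zsmul, map_zsmul]
  exact congrArg (k • ·) (h i)

theorem exists_addHom_cyclicGen {A : Type*} [AddCommGroup A] {a : ι → A}
    (ha : ∀ i, r i • a i = 0) : ∃ f : H →+ A, ∀ i, f (cyclicGen e i) = a i := by
  let onSummand (i : ι) : ZMod (r i) →+ A :=
    ZMod.lift (r i) ⟨zmultiplesHom A (a i), by simpa using ha i⟩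
  have onSummand_one (i : ι) : onSummand i 1 = a i := by
    simpa [onSummand] using ZMod.lift_coe (r i) ⟨zmultiplesHom A (a i), by simpa using ha i⟩ 1
  refine ⟨(DirectSum.toAddMonoid onSummand).comp e.toAddMonoidHom, fun i => ?_⟩
  simp [cyclicGen, onSummand_one]

theorem hom_ext_single_cyclicGen {J G : Type*} [Group G] {f g : Multiplicative (J →₀ H) →* G}
    (h : ∀ i j, f (.ofAdd (.single j (cyclicGen e i))) = g (.ofAdd (.single j (cyclicGen e i)))) :
    f = g :=
  MonoidHom.toAdditiveRight.injective <| Finsupp.addHom_ext' fun j =>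
    addHom_ext_cyclicGen e fun i => h i j

theorem exists_hom_single_cyclicGen_of_comm {J A : Type*} [CommGroup A] {a : ι → J → A}
    (hpow : ∀ i j, a i j ^ r i = 1) :
    ∃ f : Multiplicative (J →₀ H) →* A,
      ∀ i j, f (.ofAdd (.single j (cyclicGen e i))) = a i j := by
  choose f hf using fun j => exists_addHom_cyclicGen e (A := Additive A)
    (a := fun i => .ofMul (a i j)) fun i => hpow i j
  refine ⟨MonoidHom.toAdditiveRight.symm (Finsupp.liftAddHom f), fun i j => ?_⟩
  exact (Finsupp.liftAddHom_apply_single f j (cyclicGen e i)).trans (hf j i)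

open scoped IsMulCommutative in
theorem exists_hom_single_cyclicGen {J G : Type*} [Group G] {a : ι → J → G}
    (hcomm : ∀ i i' j j', Commute (a i j) (a i' j')) (hpow : ∀ i j, a i j ^ r i = 1) :
    ∃ f : Multiplicative (J →₀ H) →* G,
      ∀ i j, f (.ofAdd (.single j (cyclicGen e i))) = a i j := by
  let S : Subgroup G := Subgroup.closure {g | ∃ i j, a i j = g}
  have : IsMulCommutative S := Subgroup.isMulCommutative_closure <| by
    rintro _ ⟨i, j, rfl⟩ _ ⟨i', j', rfl⟩
    exact hcomm i i' j j'
  obtain ⟨f, hf⟩ := exists_hom_single_cyclicGen_of_comm e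
    (a := fun i j => (⟨a i j, Subgroup.subset_closure ⟨i, j, rfl⟩⟩ : S))
    fun i j => Subtype.ext (hpow i j)
  exact ⟨S.subtype.comp f, fun i j => congrArg S.subtype (hf i j)⟩

end DirectSumOfCyclicGroups

section WreathProduct

open scoped DirectSum

variable {H : Type*} [AddCommGroup H]

/-- `shift` is the action of `ℤ` on `⨁_{j ∈ ℤ} H` that defines the restricted wreath product: `k`
moves the `j`-th coordinate to position `j + k`. -/
def IsShiftAction (shift : Multiplicative ℤ →* MulAut (Multiplicative (ℤ →₀ H))) : Prop :=
  ∀ (k : ℤ) (f : ℤ →₀ H) (j : ℤ),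
    Multiplicative.toAdd (shift (.ofAdd k) (.ofAdd f)) j = f (j - k)

variable {shift : Multiplicative ℤ →* MulAut (Multiplicative (ℤ →₀ H))}

theorem IsShiftAction.apply_single (hshift : IsShiftAction shift) (k j : ℤ) (h : H) :
    shift (.ofAdd k) (.ofAdd (.single j h)) = .ofAdd (.single (j + k) h) := by
  apply Multiplicative.toAdd.injective
  ext i
  simp only [hshift k, toAdd_ofAdd, Finsupp.single_apply, eq_sub_iff_add_eq]

variable {ι : Type*} [DecidableEq ι] {r : ι → ℕ} (e : H ≃+ ⨁ i, ZMod (r i))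

theorem wreath_hom_ext (hshift : IsShiftAction shift) {G : Type*} [Group G]
    {f g : Multiplicative (ℤ →₀ H) ⋊[shift] Multiplicative ℤ →* G}
    (hinl : ∀ i, f (.inl (.ofAdd (.single 0 (cyclicGen e i)))) =
      g (.inl (.ofAdd (.single 0 (cyclicGen e i)))))
    (hinr : f (.inr (.ofAdd 1)) = g (.inr (.ofAdd 1))) : f = g := by
  have hright : f.comp SemidirectProduct.inr = g.comp SemidirectProduct.inr :=
    MonoidHom.ext_mint hinr
  refine SemidirectProduct.hom_ext (hom_ext_single_cyclicGen e fun i j => ?_) hright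
  have hsingle := hshift.apply_single j 0 (cyclicGen e i)
  rw [zero_add] at hsingle
  have hr (k : Multiplicative ℤ) : f (.inr k) = g (.inr k) := DFunLike.congr_fun hright k
  simp only [MonoidHom.comp_apply, ← hsingle, SemidirectProduct.inl_aut, map_mul, hinl, hr]

theorem exists_wreath_hom (hshift : IsShiftAction shift) {G : Type*} [Group G]
    {x : ι → G} {t : G}
    (hcomm : ∀ i j (m n : ℤ), Commute (conjBy (x i) (t ^ m)) (conjBy (x j) (t ^ n)))
    (hpow : ∀ i, x i ^ r i = 1) :
    ∃ f : Multiplicative (ℤ →₀ H) ⋊[shift] Multiplicative ℤ →* G,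
      (∀ i, f (.inl (.ofAdd (.single 0 (cyclicGen e i)))) = x i) ∧ f (.inr (.ofAdd 1)) = t := by
  -- `shift` by `j` is conjugation by `t⁻ʲ` in the convention `a^b = b⁻¹ a b`.
  obtain ⟨f, hf⟩ := exists_hom_single_cyclicGen e (a := fun i (j : ℤ) => conjBy (x i) (t ^ (-j)))
    (fun i i' j j' => hcomm i i' (-j) (-j'))
    (fun i j => by rw [conjBy_pow, hpow, one_conjBy])
  have hequiv (k : Multiplicative ℤ) : f.comp (shift k).toMonoidHom =
      (MulAut.conj (zpowersHom G t k)).toMonoidHom.comp f := by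
    refine hom_ext_single_cyclicGen e fun i j => ?_
    calc f (shift k (.ofAdd (.single j (cyclicGen e i))))
      _ = f (.ofAdd (.single (j + k.toAdd) (cyclicGen e i))) :=
        congrArg f (hshift.apply_single k.toAdd j _)
      _ = conjBy (conjBy (x i) (t ^ (-j))) (t ^ k.toAdd)⁻¹ := by
        rw [hf, conjBy_conjBy, ← zpow_neg, ← zpow_add, neg_add]
      _ = MulAut.conj (t ^ k.toAdd) (f (.ofAdd (.single j (cyclicGen e i)))) := by
        rw [hf, conjBy_eq_conj_inv _ (_)⁻¹, inv_inv]
  refine ⟨SemidirectProduct.lift f (zpowersHom G t) hequiv, fun i => ?_, ?_⟩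
  · rw [SemidirectProduct.lift_inl, hf, neg_zero, zpow_zero, conjBy_one_right]
  · rw [SemidirectProduct.lift_inr, zpowersHom_apply, toAdd_ofAdd, zpow_one]

theorem exists_presentedGroup_hom
    (shift : Multiplicative ℤ →* MulAut (Multiplicative (ℤ →₀ H))) :
    ∃ f : PresentedGroup (wreathRelators r) →*
        Multiplicative (ℤ →₀ H) ⋊[shift] Multiplicative ℤ,
      (∀ i, f (.of (.inl i)) = .inl (.ofAdd (.single 0 (cyclicGen e i)))) ∧
        f (.of (.inr ())) = .inr (.ofAdd 1) := by
  let gens : ι ⊕ Unit → Multiplicative (ℤ →₀ H) ⋊[shift] Multiplicative ℤ :=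
    Sum.elim (fun i => .inl (.ofAdd (.single 0 (cyclicGen e i)))) fun _ => .inr (.ofAdd 1)
  let N : Subgroup (Multiplicative (ℤ →₀ H) ⋊[shift] Multiplicative ℤ) :=
    SemidirectProduct.inl.range
  have hN : N = SemidirectProduct.rightHom.ker := SemidirectProduct.range_inl_eq_ker_rightHom
  have : N.Normal := hN ▸ MonoidHom.normal_ker _
  have : IsMulCommutative N := inferInstance
  have hpow (i : ι) : FreeGroup.lift gens (.of (.inl i)) ^ r i = 1 := by
    have hgen : gens (.inl i) = .inl (.ofAdd (.single 0 (cyclicGen e i))) := rfl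
    rw [FreeGroup.lift_apply_of, hgen, ← map_pow, ← ofAdd_nsmul, Finsupp.smul_single,
      nsmul_cyclicGen, Finsupp.single_zero, ofAdd_zero, map_one]
  have hrel : ∀ w ∈ wreathRelators r, FreeGroup.lift gens w = 1 := fun w =>
    map_eq_one_of_mem_wreathRelators N (fun i => ⟨_, FreeGroup.lift_apply_of.symm⟩) hpow
  exact ⟨PresentedGroup.toGroup hrel, fun i => PresentedGroup.toGroup.of hrel,
    PresentedGroup.toGroup.of hrel⟩

theorem wreath_product_fg_abelian_with_int_invariantly_finitely_Lpresented_general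
    (e : H ≃+ ⨁ i, ZMod (r i)) (hshift : IsShiftAction shift) :
    Nonempty ((Multiplicative (ℤ →₀ H) ⋊[shift] Multiplicative ℤ) ≃*
        PresentedGroup (wreathRelators r)) ∧
      ∀ y : ι, ∀ w ∈ Subgroup.normalClosure (wreathRelators r),
        conjMulEnd y w ∈ Subgroup.normalClosure (wreathRelators r) := by
  refine ⟨?_, fun y w => apply_mem_normalClosure_iteratedRelators (Set.mem_range_self y)⟩
  obtain ⟨f, hfx, hft⟩ := exists_presentedGroup_hom e shift
  obtain ⟨g, hgx, hgt⟩ := exists_wreath_hom e hshift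
    (commute_conjBy_zpow_presentedGroup r) (of_inl_pow_presentedGroup r)
  have hfg : f.comp g = MonoidHom.id _ := wreath_hom_ext e hshift
    (fun i => (congrArg f (hgx i)).trans (hfx i)) ((congrArg f hgt).trans hft)
  have hgf : g.comp f = MonoidHom.id _ := PresentedGroup.ext <| by
    rintro (i | ⟨⟩)
    · exact (congrArg g (hfx i)).trans (hgx i)
    · exact (congrArg g hft).trans hgt
  exact ⟨g.toMulEquiv f hfg hgf⟩

end WreathProduct

/-- For a finitely generated abelian group `H` (decomposed, via `e`, as a direct
product of cyclic groups `ZMod (r i)`), the restricted wreath product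
`H ≀ ℤ = (⨁_{j∈ℤ} H) ⋊ ℤ` (with `ℤ` acting by shift, encoded by `shift`) admits
the invariant finite L-presentation
`⟨X ∪ {t} | ∅ | {σ_y : y ∈ X} | {[x, y^t]} ∪ {x^{r_x} : r_x < ∞}⟩`,
where `σ_y` fixes `t` and all `x ≠ y` and sends `y ↦ y^t·y`; invariance means
each `σ_y` leaves the normal closure of the relators invariant, i.e. induces an
endomorphism of the presented group. -/
theorem wreath_product_fg_abelian_with_int_invariantly_finitely_Lpresented
    {H : Type*} [AddCommGroup H] (n : ℕ) (r : Fin n → ℕ)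
    (e : H ≃+ ((i : Fin n) → ZMod (r i)))
    (shift : Multiplicative ℤ →* MulAut (Multiplicative (ℤ →₀ H)))
    (hshift : ∀ (k : ℤ) (f : ℤ →₀ H) (j : ℤ),
      Multiplicative.toAdd
        (shift (Multiplicative.ofAdd k) (Multiplicative.ofAdd f)) j = f (j - k))
    (σ : Fin n → Monoid.End (FreeGroup (Fin n ⊕ Unit)))
    (hσ : ∀ y : Fin n, σ y = (FreeGroup.lift fun g : Fin n ⊕ Unit =>
      match g with
      | Sum.inl x =>
          if x = y then
            conjBy (FreeGroup.of (Sum.inl y)) (FreeGroup.of (Sum.inr ())) *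
              FreeGroup.of (Sum.inl y)
          else FreeGroup.of (Sum.inl x)
      | Sum.inr _ => FreeGroup.of (Sum.inr ()) :
        FreeGroup (Fin n ⊕ Unit) →* FreeGroup (Fin n ⊕ Unit)))
    (R : Set (FreeGroup (Fin n ⊕ Unit)))
    (hR : R = {w | ∃ x y : Fin n,
        w = commAt (FreeGroup.of (Sum.inl x))
          (conjBy (FreeGroup.of (Sum.inl y)) (FreeGroup.of (Sum.inr ())))} ∪
      {w | ∃ x : Fin n, r x ≠ 0 ∧ w = FreeGroup.of (Sum.inl x) ^ (r x)})
    (rels : Set (FreeGroup (Fin n ⊕ Unit)))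
    (hrels : rels = ⋃ φ ∈ Submonoid.closure (Set.range σ), ⇑φ '' R) :
    Nonempty ((Multiplicative (ℤ →₀ H) ⋊[shift] Multiplicative ℤ) ≃*
        PresentedGroup rels) ∧
      ∀ y : Fin n, ∀ w ∈ Subgroup.normalClosure rels,
        σ y w ∈ Subgroup.normalClosure rels := by
  obtain rfl : σ = conjMulEnd := funext fun y => (hσ y).trans <| by
    refine FreeGroup.ext_hom _ _ ?_
    rintro (x | ⟨⟩) <;> rfl
  subst hR hrels
  exact wreath_product_fg_abelian_with_int_invariantly_finitely_Lpresented_general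
    (e.trans (DirectSum.addEquivProd fun i => ZMod (r i)).symm) hshift
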